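/- Let f : ℝⁿ × ℝᵐ → ℝⁿ be continuously differentiable, P, Q symmetric positive definite n×n real matrices, R symmetric positive definite m×m, K ∈ ℝ^{m×n}, α > 0, and t₀ < t₁. Let x^r : [t₀,t₁] → ℝⁿ be differentiable and u^r : [t₀,t₁] → ℝᵐ with (d/dt)x^r(t) = f(x^r(t), u^r(t)), and let x : [t₀,t₁] → ℝⁿ be differentiable with (d/dt)x(t) = f(x(t), u^r(t) + K(x(t) − x^r(t))). Set δ(t) := x(t) − x^r(t) and V(t) := δ(t)ᵀPδ(t). Suppose V(t₀) ≤ α², and suppose that for every t ∈ [t₀,t₁] with V(t) ≤ α² and every s ∈ [0,1], at z := (x^r(t) + sδ(t), u^r(t) + sKδ(t)) one has P(A(z) + B(z)K) + (A(z) + B(z)K)ᵀP ⪯ −(Q + KᵀRK). Then V(t) ≤ α² for all t ∈ [t₀,t₁], and moreover there exists λ > 0, depending only on P and Q, such that V(t) ≤ V(t₀) e^{−λ(t−t₀)} for all t ∈ [t₀,t₁]. -/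

import Mathlib

open Matrix

/-- The Jacobian matrix of `f : ℝⁿ × ℝᵐ → ℝⁿ` with respect to its first
(state) argument, evaluated at `z`. -/
noncomputable def jacAmat {n m : ℕ} (f : ((Fin n → ℝ) × (Fin m → ℝ)) → (Fin n → ℝ))
    (z : (Fin n → ℝ) × (Fin m → ℝ)) : Matrix (Fin n) (Fin n) ℝ :=
  LinearMap.toMatrix' (fderiv ℝ (fun x => f (x, z.2)) z.1 : (Fin n → ℝ) →ₗ[ℝ] (Fin n → ℝ))

/-- The Jacobian matrix of `f : ℝⁿ × ℝᵐ → ℝⁿ` with respect to its second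
(input) argument, evaluated at `z`. -/
noncomputable def jacBmat {n m : ℕ} (f : ((Fin n → ℝ) × (Fin m → ℝ)) → (Fin n → ℝ))
    (z : (Fin n → ℝ) × (Fin m → ℝ)) : Matrix (Fin n) (Fin m) ℝ :=
  LinearMap.toMatrix' (fderiv ℝ (fun u => f (z.1, u)) z.2 : (Fin m → ℝ) →ₗ[ℝ] (Fin n → ℝ))

/-- `M ⪯ N` for symmetric real matrices: `N - M` is positive semidefinite. -/
def matLE {n : ℕ} (M N : Matrix (Fin n) (Fin n) ℝ) : Prop := (N - M).PosSemidef

/-- A positive definite quadratic form dominates a positive multiple of any other one. -/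
theorem Matrix.PosDef.exists_pos_mul_dotProduct_mulVec_le {n : ℕ}
    {P Q : Matrix (Fin n) (Fin n) ℝ} (hP : P.PosDef) (hQ : Q.PosDef) :
    ∃ c : ℝ, 0 < c ∧ ∀ v : Fin n → ℝ, c * (v ⬝ᵥ P *ᵥ v) ≤ v ⬝ᵥ Q *ᵥ v := by
  have hpos {M : Matrix (Fin n) (Fin n) ℝ} (hM : M.PosDef) {v : Fin n → ℝ} (hv : v ≠ 0) :
      0 < v ⬝ᵥ M *ᵥ v := by
    simpa using hM.dotProduct_mulVec_pos hv
  have hcont (M : Matrix (Fin n) (Fin n) ℝ) : Continuous fun v : Fin n → ℝ => v ⬝ᵥ M *ᵥ v := by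
    fun_prop
  have hne {v : Fin n → ℝ} (hv : v ∈ Metric.sphere (0 : Fin n → ℝ) 1) : v ≠ 0 :=
    ne_zero_of_mem_unit_sphere ⟨v, hv⟩
  obtain ⟨c, hc, hle⟩ := (isCompact_sphere (0 : Fin n → ℝ) 1).exists_forall_le'
    (f := fun v => (v ⬝ᵥ Q *ᵥ v) / (v ⬝ᵥ P *ᵥ v)) (a := 0)
    ((hcont Q).continuousOn.div (hcont P).continuousOn fun v hv => (hpos hP (hne hv)).ne')
    fun v hv => div_pos (hpos hQ (hne hv)) (hpos hP (hne hv))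
  refine ⟨c, hc, fun v => ?_⟩
  rcases eq_or_ne v 0 with rfl | hv
  · simp
  have hn : ‖v‖ ≠ 0 := norm_ne_zero_iff.2 hv
  have h := hle (‖v‖⁻¹ • v) (by simp [norm_smul, hn])
  simp only [mulVec_smul, smul_dotProduct, dotProduct_smul, smul_eq_mul] at h
  rw [mul_div_mul_left _ _ (inv_ne_zero hn), mul_div_mul_left _ _ (inv_ne_zero hn)] at h
  exact (le_div_iff₀ (hpos hP hv)).1 h

theorem Matrix.IsHermitian.dotProduct_mulVec_comm {n : ℕ} {P : Matrix (Fin n) (Fin n) ℝ}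
    (hP : P.IsHermitian) (v w : Fin n → ℝ) : v ⬝ᵥ P *ᵥ w = w ⬝ᵥ P *ᵥ v := by
  have hT : Pᵀ = P := by simpa using hP.eq
  rw [dotProduct_mulVec, ← mulVec_transpose, hT, dotProduct_comm]

theorem HasDerivAt.dotProduct_mulVec_self {n : ℕ} {P : Matrix (Fin n) (Fin n) ℝ}
    (hP : P.IsHermitian) {y : ℝ → Fin n → ℝ} {y' : Fin n → ℝ} {t : ℝ} (hy : HasDerivAt y y' t) :
    HasDerivAt (fun s => y s ⬝ᵥ P *ᵥ y s) (2 * (y t ⬝ᵥ P *ᵥ y')) t := by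
  have hPy : HasDerivAt (fun s => P *ᵥ y s) (P *ᵥ y') t :=
    (LinearMap.toContinuousLinearMap P.mulVecLin).hasFDerivAt.comp_hasDerivAt t hy
  rw [hasDerivAt_pi] at hy hPy
  have h := HasDerivAt.fun_sum (u := Finset.univ) fun i _ => (hy i).fun_mul (hPy i)
  refine h.congr_deriv ?_
  rw [Finset.sum_add_distrib]
  change y' ⬝ᵥ P *ᵥ y t + y t ⬝ᵥ P *ᵥ y' = _
  rw [hP.dotProduct_mulVec_comm y' (y t)]
  ring

/-- The derivative of `f` in direction `(v, w)` in terms of the two partial Jacobians. -/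
theorem fderiv_apply_eq_jacAmat_add_jacBmat {n m : ℕ}
    {f : ((Fin n → ℝ) × (Fin m → ℝ)) → (Fin n → ℝ)} {z : (Fin n → ℝ) × (Fin m → ℝ)}
    (hf : DifferentiableAt ℝ f z) (v : Fin n → ℝ) (w : Fin m → ℝ) :
    fderiv ℝ f z (v, w) = jacAmat f z *ᵥ v + jacBmat f z *ᵥ w := by
  have hA : HasFDerivAt (fun x => f (x, z.2)) _ z.1 :=
    HasFDerivAt.comp (g := f) z.1 hf.hasFDerivAt (hasFDerivAt_prodMk_left z.1 z.2)
  have hB : HasFDerivAt (fun u => f (z.1, u)) _ z.2 :=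
    HasFDerivAt.comp (g := f) z.2 hf.hasFDerivAt (hasFDerivAt_prodMk_right z.1 z.2)
  rw [jacAmat, jacBmat, LinearMap.toMatrix'_mulVec, LinearMap.toMatrix'_mulVec, hA.fderiv,
    hB.fderiv]
  simp [← map_add]

/-- Mean value theorem for the increment of `f` along the segment from `(a, b)` to
`(a + v, b + K v)`, tested against a fixed vector. -/
theorem exists_dotProduct_sub_eq_jac {n m : ℕ}
    {f : ((Fin n → ℝ) × (Fin m → ℝ)) → (Fin n → ℝ)} (hf : Differentiable ℝ f)
    (K : Matrix (Fin m) (Fin n) ℝ) (p a v : Fin n → ℝ) (b : Fin m → ℝ) :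
    ∃ s ∈ Set.Icc (0 : ℝ) 1,
      p ⬝ᵥ (f (a + v, b + K *ᵥ v) - f (a, b)) =
        p ⬝ᵥ ((jacAmat f (a + s • v, b + s • K *ᵥ v) +
          jacBmat f (a + s • v, b + s • K *ᵥ v) * K) *ᵥ v) := by
  have hline (s : ℝ) : HasDerivAt (fun s : ℝ => (a + s • v, b + s • K *ᵥ v)) (v, K *ᵥ v) s := by
    refine HasDerivAt.prodMk ?_ ?_
    · simpa using ((hasDerivAt_id s).smul_const v).const_add a
    · simpa using ((hasDerivAt_id s).smul_const (K *ᵥ v)).const_add b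
  have hderiv (s : ℝ) : HasDerivAt (fun s : ℝ => p ⬝ᵥ f (a + s • v, b + s • K *ᵥ v))
      (p ⬝ᵥ fderiv ℝ f (a + s • v, b + s • K *ᵥ v) (v, K *ᵥ v)) s := by
    have h := (hf (a + s • v, b + s • K *ᵥ v)).hasFDerivAt.comp_hasDerivAt s (hline s)
    rw [hasDerivAt_pi] at h
    exact HasDerivAt.fun_sum fun i _ => (h i).const_mul (p i)
  obtain ⟨s, hs, hslope⟩ := exists_hasDerivAt_eq_slope _ _ zero_lt_one
    (fun s _ => (hderiv s).continuousAt.continuousWithinAt) fun s _ => hderiv s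
  refine ⟨s, Set.Ioo_subset_Icc_self hs, ?_⟩
  rw [fderiv_apply_eq_jacAmat_add_jacBmat (hf _)] at hslope
  simpa [add_mulVec, dotProduct_sub] using hslope.symm

/-- A function whose derivative is at most `-c * V` wherever `V ≤ β` stays below `β` and decays
exponentially with rate `c`. -/
theorem le_and_le_mul_exp_of_deriv_le {V V' : ℝ → ℝ} {a b c β : ℝ} (hc : 0 < c) (hβ : 0 < β)
    (hV : ∀ t ∈ Set.Icc a b, HasDerivAt V (V' t) t) (ha : V a ≤ β)
    (hV' : ∀ t ∈ Set.Icc a b, V t ≤ β → V' t ≤ -c * V t) :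
    (∀ t ∈ Set.Icc a b, V t ≤ β) ∧
      ∀ t ∈ Set.Icc a b, V t ≤ V a * Real.exp (-c * (t - a)) := by
  have hinv : ∀ t ∈ Set.Icc a b, V t ≤ β :=
    image_le_of_deriv_right_lt_deriv_boundary (B := fun _ => β) (B' := fun _ => 0)
      (fun t ht => (hV t ht).continuousAt.continuousWithinAt)
      (fun t ht => (hV t (Set.Ico_subset_Icc_self ht)).hasDerivWithinAt) ha
      (fun t => hasDerivAt_const t β) fun t ht h => by
        have := hV' t (Set.Ico_subset_Icc_self ht) h.le
        rw [h] at this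
        nlinarith [mul_pos hc hβ]
  refine ⟨hinv, fun t ht => ?_⟩
  have hW (s : ℝ) (hs : s ∈ Set.Icc a b) :
      HasDerivAt (fun s => V s * Real.exp (c * (s - a)))
        ((V' s + c * V s) * Real.exp (c * (s - a))) s := by
    have hexp : HasDerivAt (fun s => Real.exp (c * (s - a)))
        (Real.exp (c * (s - a)) * (c * 1)) s :=
      (((hasDerivAt_id s).sub_const a).const_mul c).exp
    exact ((hV s hs).fun_mul hexp).congr_deriv (by ring)
  have h := image_le_of_deriv_right_le_deriv_boundary (B := fun _ => V a) (B' := fun _ => 0)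
    (fun s hs => (hW s hs).continuousAt.continuousWithinAt)
    (fun s hs => (hW s (Set.Ico_subset_Icc_self hs)).hasDerivWithinAt) (by simp)
    continuousOn_const (fun s _ => hasDerivWithinAt_const s _ _)
    (fun s hs => mul_nonpos_of_nonpos_of_nonneg (by
      have hs' := Set.Ico_subset_Icc_self hs
      linarith [hV' s hs' (hinv s hs')]) (Real.exp_pos _).le) ht
  rwa [neg_mul, Real.exp_neg, ← div_eq_mul_inv, le_div_iff₀ (Real.exp_pos _)]

/-- The quadratic-form consequence of the Lyapunov matrix inequality. -/
theorem two_mul_dotProduct_mulVec_le_of_matLE {n m : ℕ} {P Q M : Matrix (Fin n) (Fin n) ℝ}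
    (hP : P.IsHermitian) {R : Matrix (Fin m) (Fin m) ℝ} (hR : R.PosSemidef)
    (K : Matrix (Fin m) (Fin n) ℝ) (h : matLE (P * M + Mᵀ * P) (-(Q + Kᵀ * R * K)))
    (v : Fin n → ℝ) : 2 * (v ⬝ᵥ P *ᵥ (M *ᵥ v)) ≤ -(v ⬝ᵥ Q *ᵥ v) := by
  have h0 := Matrix.PosSemidef.dotProduct_mulVec_nonneg h v
  have hK := hR.dotProduct_mulVec_nonneg (K *ᵥ v)
  have hKv : v ⬝ᵥ Kᵀ *ᵥ (R *ᵥ (K *ᵥ v)) = K *ᵥ v ⬝ᵥ R *ᵥ (K *ᵥ v) := by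
    rw [dotProduct_mulVec, vecMul_transpose]
  have hMv : v ⬝ᵥ Mᵀ *ᵥ (P *ᵥ v) = v ⬝ᵥ P *ᵥ (M *ᵥ v) := by
    rw [dotProduct_mulVec, vecMul_transpose, hP.dotProduct_mulVec_comm]
  simp only [star_trivial, sub_mulVec, neg_mulVec, add_mulVec, ← mulVec_mulVec, dotProduct_sub,
    dotProduct_neg, dotProduct_add, hKv, hMv] at h0 hK
  linarith

/-- positive invariance of the terminal sublevel set
`{V ≤ α²}` of `V(t) = (x(t) - x^r(t))ᵀ P (x(t) - x^r(t))` under the terminal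
control law, together with exponential decrease `V(t) ≤ V(t₀) e^{-λ(t-t₀)}`
for some `λ > 0` depending only on `P` and `Q`. -/
theorem stmt9 {n : ℕ} (P Q : Matrix (Fin n) (Fin n) ℝ) (hP : P.PosDef)
    (hQ : Q.PosDef) :
    ∃ lam : ℝ, 0 < lam ∧
      ∀ (m : ℕ) (f : ((Fin n → ℝ) × (Fin m → ℝ)) → (Fin n → ℝ)),
        ContDiff ℝ 1 f →
      ∀ (R : Matrix (Fin m) (Fin m) ℝ), R.PosDef →
      ∀ (K : Matrix (Fin m) (Fin n) ℝ) (α : ℝ), 0 < α →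
      ∀ (t₀ t₁ : ℝ), t₀ < t₁ →
      ∀ (xr x : ℝ → Fin n → ℝ) (ur : ℝ → Fin m → ℝ),
        (∀ t ∈ Set.Icc t₀ t₁, HasDerivAt xr (f (xr t, ur t)) t) →
        (∀ t ∈ Set.Icc t₀ t₁,
          HasDerivAt x (f (x t, ur t + K.mulVec (x t - xr t))) t) →
        ((x t₀ - xr t₀) ⬝ᵥ P.mulVec (x t₀ - xr t₀) ≤ α ^ 2) →
        (∀ t ∈ Set.Icc t₀ t₁,
          ((x t - xr t) ⬝ᵥ P.mulVec (x t - xr t) ≤ α ^ 2) →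
          ∀ s ∈ Set.Icc (0 : ℝ) 1,
            matLE
              (P * (jacAmat f (xr t + s • (x t - xr t),
                               ur t + s • K.mulVec (x t - xr t)) +
                    jacBmat f (xr t + s • (x t - xr t),
                               ur t + s • K.mulVec (x t - xr t)) * K) +
               (jacAmat f (xr t + s • (x t - xr t),
                           ur t + s • K.mulVec (x t - xr t)) +
                jacBmat f (xr t + s • (x t - xr t),
                           ur t + s • K.mulVec (x t - xr t)) * K)ᵀ * P)
              (-(Q + Kᵀ * R * K))) →
        (∀ t ∈ Set.Icc t₀ t₁,
            (x t - xr t) ⬝ᵥ P.mulVec (x t - xr t) ≤ α ^ 2) ∧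
        (∀ t ∈ Set.Icc t₀ t₁,
            (x t - xr t) ⬝ᵥ P.mulVec (x t - xr t) ≤
              ((x t₀ - xr t₀) ⬝ᵥ P.mulVec (x t₀ - xr t₀)) *
                Real.exp (-lam * (t - t₀))) := by
  obtain ⟨c, hc, hPQ⟩ := hP.exists_pos_mul_dotProduct_mulVec_le hQ
  refine ⟨c, hc, ?_⟩
  intro m f hf R hR K α hα t₀ t₁ _ xr x ur hxr hx h₀ hLyap
  refine le_and_le_mul_exp_of_deriv_le (V := fun t => (x t - xr t) ⬝ᵥ P *ᵥ (x t - xr t)) hc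
    (pow_pos hα 2)
    (fun t ht => ((hx t ht).fun_sub (hxr t ht)).dotProduct_mulVec_self hP.isHermitian) h₀
    fun t ht hVt => ?_
  obtain ⟨s, hs, hmean⟩ := exists_dotProduct_sub_eq_jac (hf.differentiable one_ne_zero) K
    (P *ᵥ (x t - xr t)) (xr t) (x t - xr t) (ur t)
  have hle := two_mul_dotProduct_mulVec_le_of_matLE hP.isHermitian hR.posSemidef K
    (hLyap t ht hVt s hs) (x t - xr t)
  have hswap (w : Fin n → ℝ) : P *ᵥ (x t - xr t) ⬝ᵥ w = (x t - xr t) ⬝ᵥ P *ᵥ w := by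
    rw [dotProduct_comm, hP.isHermitian.dotProduct_mulVec_comm]
  rw [add_sub_cancel, hswap, hswap] at hmean
  rw [hmean]
  linarith [hPQ (x t - xr t)]
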